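/- arXiv:2511.18623 — 3 statements merged into one kernel-verified Lean document; each statement's English description precedes it below -/
import Mathlib

section
/- Splitting formula for the Riesz energy. Let d ≥ 1 and d−2 < s < d (with d = 1 if s = 0), and let V : ℝ^d → ℝ be measurable. Let μ be a compactly supported probability measure on ℝ^d without atoms such that ∬|g(x−y)|dμ(x)dμ(y) < ∞ and ∫|V|dμ < ∞. Set c = ∬ g(x−y)dμ(x)dμ(y) + ∫V dμ and ζ = g∗μ + V − c. Then for every N ≥ 1 and every pairwise distinct X_N = (x_1,…,x_N) ∈ (ℝ^d)^N, H_N(X_N) = N²ℰ(μ) + N∑_{i=1}^N ζ(x_i) + F_N(X_N, μ). Moreover, if h^μ + V equals a constant c′ μ-almost everywhere, then c′ = c; in particular the identity holds for the equilibrium measure μ = μ_V with ζ = ζ_V = h^{μ_V} + V − c_V. -/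
noncomputable section

open MeasureTheory Filter Set Metric
open scoped ENNReal NNReal RealInnerProductSpace Topology

/-- Euclidean space `ℝ^d`. -/
abbrev Ed (d : ℕ) : Type := EuclideanSpace ℝ (Fin d)

/-- Radial profile of the Riesz kernel: `g(r) = r^{-s}/s` for `s ≠ 0`, `-log r` for `s = 0`. -/
def rks (s r : ℝ) : ℝ := if s = 0 then -Real.log r else r ^ (-s) / s

/-- The Riesz kernel `g` on `ℝ^d`. -/
def rk {d : ℕ} (s : ℝ) (x : Ed d) : ℝ := rks s ‖x‖

/-- The gradient of the Riesz kernel: `∇g(z) = -z |z|^{-s-2}`. -/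
def gradRk {d : ℕ} (s : ℝ) (z : Ed d) : Ed d := -(‖z‖ ^ (-(s + 2))) • z

/-- The `N`-point Riesz Hamiltonian with external potential `V`. -/
def HamN {d : ℕ} (s : ℝ) (V : Ed d → ℝ) {N : ℕ} (X : Fin N → Ed d) : ℝ :=
  (1 / 2) * (∑ i, ∑ j ∈ Finset.univ.erase i, rk s (X i - X j)) + N * ∑ i, V (X i)

/-- The partition function `Z_{N,β}`. -/
def ZN (d : ℕ) (s β : ℝ) (V : Ed d → ℝ) (N : ℕ) : ℝ :=
  ∫ X : Fin N → Ed d, Real.exp (-β * (N : ℝ) ^ (-(s / (d : ℝ))) * HamN s V X)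

/-- The Gibbs measure `P_{N,β}` of the Riesz gas. -/
def gibbs (d : ℕ) (s β : ℝ) (V : Ed d → ℝ) (N : ℕ) : Measure (Fin N → Ed d) :=
  volume.withDensity (fun X =>
    ENNReal.ofReal (Real.exp (-β * (N : ℝ) ^ (-(s / (d : ℝ))) * HamN s V X) / ZN d s β V N))

/-- Riesz potential `h^μ = g * μ` generated by a measure. -/
def pot {d : ℕ} (s : ℝ) (μ : Measure (Ed d)) (x : Ed d) : ℝ := ∫ y, rk s (x - y) ∂μ

/-- The mean-field energy functional `ℰ`. -/
def rieszEnergy {d : ℕ} (s : ℝ) (V : Ed d → ℝ) (μ : Measure (Ed d)) : ℝ :=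
  (1 / 2) * ∫ x, pot s μ x ∂μ + ∫ x, V x ∂μ

/-- The effective potential `ζ_V = h^{μ_V} + V - c_V`. -/
def zetaF {d : ℕ} (s : ℝ) (V : Ed d → ℝ) (μ : Measure (Ed d)) (c : ℝ) (x : Ed d) : ℝ :=
  pot s μ x + V x - c

/-- Axis-parallel cube of side `ℓ` centered at `z`. -/
def cube {d : ℕ} (z : Ed d) (ℓ : ℝ) : Set (Ed d) := {x | ∀ i, |x i - z i| ≤ ℓ / 2}

/-- The `ε`-bulk of a set (points of `S` at distance at least `ε` from the boundary). -/
def bulk {d : ℕ} (S : Set (Ed d)) (ε : ℝ) : Set (Ed d) :=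
  {x ∈ S | ε ≤ Metric.infDist x (frontier S)}

/-- Point-count discrepancy of a configuration in a region. -/
def discrep {d : ℕ} (N : ℕ) (X : Fin N → Ed d) (μ : Measure (Ed d)) (B : Set (Ed d)) : ℝ :=
  ({i : Fin N | X i ∈ B}.ncard : ℝ) - N * (μ B).toReal

/-- Integral of a function against the fluctuation `∑ δ_{x_i} - N μ`. -/
def fluctInt {d : ℕ} (N : ℕ) (μ : Measure (Ed d)) (φ : Ed d → ℝ) (X : Fin N → Ed d) : ℝ :=
  (∑ i, φ (X i)) - N * ∫ x, φ x ∂μ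

/-- The next-order energy `F_N(X_N, μ)` (the off-diagonal double integral of `g` against
the fluctuation, expanded bilinearly). -/
def FNenergy {d : ℕ} (s : ℝ) (N : ℕ) (X : Fin N → Ed d) (μ : Measure (Ed d)) : ℝ :=
  (1 / 2) * (∑ i, ∑ j ∈ Finset.univ.erase i, rk s (X i - X j))
    - N * (∑ i, ∫ y in {y | y ≠ X i}, rk s (X i - y) ∂μ)
    + (N : ℝ) ^ 2 / 2 * ∫ x, (∫ y in {y | y ≠ x}, rk s (x - y) ∂μ) ∂μ

/-- The Riesz kernel on the extended space `ℝ^d × ℝ`. -/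
def rkExt {d : ℕ} (s : ℝ) (p : Ed d × ℝ) : ℝ := rks s (Real.sqrt (‖p.1‖ ^ 2 + p.2 ^ 2))

/-- The extended electric potential `h_N[X_N, μ]`. -/
def extPot {d : ℕ} (s : ℝ) (N : ℕ) (X : Fin N → Ed d) (μ : Measure (Ed d))
    (p : Ed d × ℝ) : ℝ :=
  (∑ i, rkExt s (p.1 - X i, p.2)) - N * ∫ x, rkExt s (p.1 - x, p.2) ∂μ

/-- Truncation radii `r_i = (1/4) min(min_{j ≠ i} |x_i - x_j|, N^{-1/d})`. -/
def minr {d : ℕ} (N : ℕ) (X : Fin N → Ed d) (i : Fin N) : ℝ :=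
  (1 / 4) * min (⨅ j ∈ ({i}ᶜ : Set (Fin N)), ‖X i - X j‖) ((N : ℝ) ^ (-(1 : ℝ) / (d : ℝ)))

/-- Truncation profile `f_η = (g - g(η))₊` on the extended space. -/
def truncFn {d : ℕ} (s η : ℝ) (p : Ed d × ℝ) : ℝ := max (rkExt s p - rks s η) 0

/-- The truncated extended electric potential `h_{N, r}`. -/
def extPotTrunc {d : ℕ} (s : ℝ) (N : ℕ) (X : Fin N → Ed d) (μ : Measure (Ed d))
    (p : Ed d × ℝ) : ℝ :=
  extPot s N X μ p - ∑ i, truncFn s (minr N X i) (p.1 - X i, p.2)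

/-- The local electric energy `F̃^{Q}_N(X_N, μ) = ∫_{Q × [-ℓ,ℓ]} |y|^γ |∇ h_{N,r}|²`. -/
def locEnergy {d : ℕ} (s : ℝ) (N : ℕ) (X : Fin N → Ed d) (μ : Measure (Ed d))
    (Q : Set (Ed d)) (ℓ : ℝ) : ℝ :=
  ∫ p in Q ×ˢ Set.Icc (-ℓ) ℓ,
    |p.2| ^ (s - (d : ℝ) + 1) * ‖fderiv ℝ (extPotTrunc s N X μ) p‖ ^ 2

/-- The global extended electric energy `∫_{ℝ^{d+1}} |y|^γ |∇ h_{N,r}|²`. -/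
def globEnergy {d : ℕ} (s : ℝ) (N : ℕ) (X : Fin N → Ed d) (μ : Measure (Ed d)) : ℝ :=
  ∫ p : Ed d × ℝ, |p.2| ^ (s - (d : ℝ) + 1) * ‖fderiv ℝ (extPotTrunc s N X μ) p‖ ^ 2

/-- The Laplacian of a function on `ℝ^d`. -/
def lapl {d : ℕ} (V : Ed d → ℝ) (x : Ed d) : ℝ :=
  ∑ i : Fin d, iteratedFDeriv ℝ 2 V x (fun _ => EuclideanSpace.single i (1 : ℝ))

/-- A set is the graph of a Lipschitz function over a hyperplane. -/
def IsLipschitzGraph {d : ℕ} (S : Set (Ed d)) : Prop :=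
  ∃ (u : Ed d) (K : ℝ≥0) (f : Ed d → ℝ), ‖u‖ = 1 ∧ LipschitzWith K f ∧
    S = {y : Ed d | ∃ x : Ed d, ⟪x, u⟫ = 0 ∧ y = x + f x • u}

/-- Hölder regularity of order `k + ε'` on a set. -/
def HolderSmoothOn {d : ℕ} (k : ℕ) (ε' : ℝ) (f : Ed d → ℝ) (A : Set (Ed d)) : Prop :=
  ContDiffOn ℝ k f A ∧ ∃ C : ℝ, ∀ x ∈ A, ∀ y ∈ A,
    ‖iteratedFDerivWithin ℝ k f A x - iteratedFDerivWithin ℝ k f A y‖ ≤ C * ‖x - y‖ ^ ε'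

/-- `S` is the (closed) support of the measure `μ`. -/
def IsSupportOf {d : ℕ} (μ : Measure (Ed d)) (S : Set (Ed d)) : Prop :=
  IsClosed S ∧ μ Sᶜ = 0 ∧ ∀ F : Set (Ed d), IsClosed F → μ Fᶜ = 0 → S ⊆ F

/-- The equilibrium-measure framework together with assumptions (A1)–(A6) of the paper:
`μV` is the compactly supported equilibrium measure with support `Sg`, `cV` is the
Euler–Lagrange constant, and (A1) nondegeneracy of `ζ_V`, (A2) positive Laplacian,
(A3) Lipschitz free boundary, (A4) regularity of the equilibrium measure,
(A5) regularity and growth of `∇V`, (A6) one-cut regime hold. -/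
structure EqAssumptions (d : ℕ) (s : ℝ) (V : Ed d → ℝ) (k : ℕ)
    (μV : Measure (Ed d)) (Sg : Set (Ed d)) (cV : ℝ) : Prop where
  prob : IsProbabilityMeasure μV
  cpt : IsCompact Sg
  suppEq : IsSupportOf μV Sg
  minimizes : ∀ ν : Measure (Ed d), IsProbabilityMeasure ν →
    (∃ K : Set (Ed d), IsCompact K ∧ ν Kᶜ = 0) → rieszEnergy s V μV ≤ rieszEnergy s V ν
  el_eq : ∀ᵐ x ∂(volume.restrict Sg), pot s μV x + V x = cV
  el_ge : ∀ᵐ x ∂(volume : Measure (Ed d)), cV ≤ pot s μV x + V x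
  a1 : ∃ c > (0 : ℝ), ∃ U : Set (Ed d), IsOpen U ∧ Sg ⊆ U ∧ ∀ x ∈ U,
    c * Metric.infDist x (frontier Sg) ^ (1 + ((d : ℝ) - s) / 2) ≤ zetaF s V μV cV x
  a2 : ∀ x, V x < cV → 0 ≤ lapl V x
  a3 : IsLipschitzGraph (frontier Sg)
  a4 : ∃ ε' ∈ Set.Ioo (0 : ℝ) 1, ∃ sbar : Ed d → ℝ,
    (∃ c > (0 : ℝ), ∀ x ∈ Sg, c ≤ sbar x) ∧ HolderSmoothOn k ε' sbar Sg ∧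
    μV = volume.withDensity (fun x => ENNReal.ofReal
      (Sg.indicator
        (fun y => sbar y * Metric.infDist y (frontier Sg) ^ (1 - ((d : ℝ) - s) / 2)) x))
  a5 : ContDiff ℝ (k + 1) V ∧ ∃ r ≥ (0 : ℝ), ∃ c > (0 : ℝ), ∃ C > (0 : ℝ),
    ∀ x : Ed d, C ≤ ‖x‖ → c * ‖x‖ ^ r ≤ ‖fderiv ℝ V x‖ ∧
      ∀ m : ℕ, 1 ≤ m → m ≤ k → ‖iteratedFDeriv ℝ m V x‖ ≤ C * ‖x‖ ^ (r - m + 1)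
  a6 : IsConnected Sg

/-- The constant `c_{d,α}` of the fractional Laplacian. -/
def cdAlpha (d : ℕ) (α : ℝ) : ℝ :=
  4 ^ α * Real.Gamma ((d : ℝ) / 2 + α) / (Real.pi ^ ((d : ℝ) / 2) * |Real.Gamma (-α)|)

/-- The constant `c_{d,s}`, with `α = (d - s)/2`. -/
def cds (d : ℕ) (s : ℝ) : ℝ :=
  Real.pi ^ ((d : ℝ) / 2) * 4 ^ (((d : ℝ) - s) / 2) * Real.Gamma (((d : ℝ) - s) / 2) /
    Real.Gamma ((d : ℝ) / 2 - ((d : ℝ) - s) / 2)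

/-- Truncated integral appearing in the principal value defining `(-Δ)^α`. -/
def pvInt {d : ℕ} (α : ℝ) (f : Ed d → ℝ) (x : Ed d) (η : ℝ) : ℝ :=
  ∫ y in {y : Ed d | η < ‖y‖}, (f x - f (x + y)) / ‖y‖ ^ ((d : ℝ) + 2 * α)

/-- Convergence of the principal value defining `(-Δ)^α f (x)`. -/
def pvConverges {d : ℕ} (α : ℝ) (f : Ed d → ℝ) (x : Ed d) : Prop :=
  ∃ L : ℝ, Tendsto (pvInt α f x) (nhdsWithin (0 : ℝ) (Set.Ioi 0)) (nhds L)

/-- The fractional Laplacian `(-Δ)^α`, as a principal value. -/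
def fracLap {d : ℕ} (α : ℝ) (f : Ed d → ℝ) (x : Ed d) : ℝ :=
  cdAlpha d α * limUnder (nhdsWithin (0 : ℝ) (Set.Ioi 0)) (pvInt α f x)

/-- Finiteness of the Gagliardo energy of order `α`. -/
def gagliardoFinite {d : ℕ} (α : ℝ) (u : Ed d → ℝ) : Prop :=
  Integrable (fun p : Ed d × Ed d => (u p.1 - u p.2) ^ 2 / ‖p.1 - p.2‖ ^ ((d : ℝ) + 2 * α))

/-- The squared Gagliardo seminorm `[u]_α²`. -/
def gagliardoSq {d : ℕ} (α : ℝ) (u : Ed d → ℝ) : ℝ :=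
  ∫ p : Ed d × Ed d, (u p.1 - u p.2) ^ 2 / ‖p.1 - p.2‖ ^ ((d : ℝ) + 2 * α)

/-- `u` is the `α`-harmonic extension of `φ` relative to `Sg`: it agrees with `φ` a.e.
on `Sg` and minimizes the Gagliardo energy among such functions. -/
def IsAHarmonicExt {d : ℕ} (α : ℝ) (Sg : Set (Ed d)) (φ u : Ed d → ℝ) : Prop :=
  gagliardoFinite α u ∧ (∀ᵐ x ∂(volume.restrict Sg), u x = φ x) ∧
    ∀ v : Ed d → ℝ, gagliardoFinite α v → (∀ᵐ x ∂(volume.restrict Sg), v x = φ x) →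
      gagliardoSq α u ≤ gagliardoSq α v

/-- Bounds `|φ|_{C^σ} ≤ bound σ` on all Hölder seminorms of order `σ ≤ k`. -/
def CNormLe {d : ℕ} (k : ℕ) (φ : Ed d → ℝ) (bound : ℝ → ℝ) : Prop :=
  (∀ m : ℕ, m ≤ k → ∀ x, ‖iteratedFDeriv ℝ m φ x‖ ≤ bound m) ∧
    ∀ m : ℕ, ∀ θ : ℝ, 0 < θ → θ < 1 → (m : ℝ) + θ ≤ (k : ℝ) → ∀ x y, x ≠ y →
      ‖iteratedFDeriv ℝ m φ x - iteratedFDeriv ℝ m φ y‖ ≤ bound ((m : ℝ) + θ) * ‖x - y‖ ^ θ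

/-- The extension-regularity assumption: `dist(·, ∂Σ)^α (-Δ)^α φ^Σ` extends to a
function `w` of class `C^{k+ε'}` on the neighborhood `U` of `Σ`. -/
def ExtRegularity {d : ℕ} (α : ℝ) (Sg U : Set (Ed d)) (k : ℕ) (ε' : ℝ)
    (φS w : Ed d → ℝ) : Prop :=
  HolderSmoothOn k ε' w U ∧
    ∀ x ∈ interior Sg, w x = Metric.infDist x (frontier Sg) ^ α * fracLap α φS x

/-- The transport bounds of order `kk`, with constant `M`, at scale `ℓ` around `z`. -/
def TransportBounds {d : ℕ} (s : ℝ) (kk : ℕ) (M ℓ : ℝ) (z : Ed d)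
    (Sg U : Set (Ed d)) (ψ : Ed d → Ed d) : Prop :=
  ∀ m : ℕ, m ≤ kk → ∀ x : Ed d, x ∉ frontier Sg →
    (x ∈ cube z (2 * ℓ) → ‖iteratedFDeriv ℝ m ψ x‖ ≤ M * ℓ ^ (-((d : ℝ) - s + m - 1))) ∧
    (x ∈ U \ cube z (2 * ℓ) →
      ‖iteratedFDeriv ℝ m ψ x‖ ≤ M * ℓ ^ (d : ℝ) * ‖x - z‖ ^ (-(2 * (d : ℝ) - s + m - 1))) ∧
    (x ∉ U → ‖iteratedFDeriv ℝ m ψ x‖ ≤ M * ℓ ^ (d : ℝ) * ‖x - z‖ ^ (-(s + 2 + m)))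

/-- Entropy of a measure relative to Lebesgue measure. -/
def entM {d : ℕ} (μ : Measure (Ed d)) : ℝ :=
  ∫ x, (μ.rnDeriv volume x).toReal * Real.log (μ.rnDeriv volume x).toReal

/-- Density of a measure with respect to Lebesgue measure. -/
def mudens {d : ℕ} (μ : Measure (Ed d)) (x : Ed d) : ℝ := (μ.rnDeriv volume x).toReal

/-- Pointwise divergence of a vector field on `ℝ^d`. -/
def divg {d : ℕ} (F : Ed d → Ed d) (x : Ed d) : ℝ :=
  ∑ i : Fin d, fderiv ℝ F x (EuclideanSpace.single i (1 : ℝ)) i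

/-- **Splitting formula for the Riesz energy** (Lemma 3.1 of the paper). -/
theorem splitting_formula
    {d : ℕ} (hd : 1 ≤ d) {s : ℝ} (hs₁ : (d : ℝ) - 2 < s) (hs₂ : s < d)
    (hs₀ : s = 0 → d = 1)
    (V : Ed d → ℝ) (hV : Measurable V)
    (μ : Measure (Ed d)) (hprob : IsProbabilityMeasure μ)
    (hcpt : ∃ K : Set (Ed d), IsCompact K ∧ μ Kᶜ = 0)
    (hatom : ∀ x : Ed d, μ {x} = 0)
    (hgint : Integrable (fun p : Ed d × Ed d => rk s (p.1 - p.2)) (μ.prod μ))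
    (hVint : Integrable V μ) :
    (∀ N : ℕ, 1 ≤ N → ∀ X : Fin N → Ed d, Function.Injective X →
      HamN s V X = (N : ℝ) ^ 2 * rieszEnergy s V μ +
        N * (∑ i, zetaF s V μ ((∫ x, pot s μ x ∂μ) + ∫ x, V x ∂μ) (X i)) +
          FNenergy s N X μ) ∧
    ∀ c' : ℝ, (∀ᵐ x ∂μ, pot s μ x + V x = c') →
      c' = (∫ x, pot s μ x ∂μ) + ∫ x, V x ∂μ := by
  have hpot : ∀ x : Ed d, ∫ y in {y | y ≠ x}, rk s (x - y) ∂μ = pot s μ x := by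
    intro x
    have h : ({y | y ≠ x} : Set (Ed d)) =ᵐ[μ] Set.univ := by
      rw [MeasureTheory.ae_eq_univ]
      have h2 : ({y | y ≠ x} : Set (Ed d))ᶜ = {x} := by ext y; simp
      rw [h2]; exact hatom x
    rw [MeasureTheory.setIntegral_congr_set h, MeasureTheory.setIntegral_univ]; rfl
  refine ⟨?_, ?_⟩
  · intro N _ X _
    simp only [HamN, FNenergy, rieszEnergy, zetaF, hpot, Finset.sum_sub_distrib,
      Finset.sum_add_distrib, Finset.sum_const, Finset.card_univ, Fintype.card_fin, nsmul_eq_mul]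
    ring
  · intro c' hc
    have hpi : Integrable (fun x => pot s μ x) μ := hgint.integral_prod_left
    rw [← integral_add hpi hVint, integral_congr_ae hc]
    simp

end
end

section
/- Mesoscopic limit of the variance term. Let d ≥ 1 and d−2 < s < d, α = (d−s)/2 ∈ (0,1). Let Σ ⊂ ℝ^d be compact with positive Lebesgue measure, let ε > 0 and z ∈ Σ with dist(z, Σ^c) ≥ ε, and let φ₀ ∈ C¹_c(ℝ^d) be bounded. For 0 < ℓ ≤ 1 set φ_ℓ = φ₀((·−z)/ℓ) and let u_ℓ be a minimizer of the Gagliardo energy [u]_α² among measurable u with [u]_α² < ∞ and u = φ_ℓ a.e. on Σ. Then ℓ^{−s}[u_ℓ]_α² → [φ₀]_α² as ℓ → 0⁺. More precisely, 0 ≤ [φ₀]_α² − ℓ^{−s}[u_ℓ]_α² ≤ C ‖φ₀‖_∞² ℓ^{d−s} for all ℓ small enough (depending on ε and supp φ₀), with C depending only on d, s and φ₀. -/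
noncomputable section

open MeasureTheory Filter Set Metric
open scoped ENNReal NNReal RealInnerProductSpace Topology

lemma mv_tail_integrable {d : ℕ} (hd : 1 ≤ d) {n : ℝ} (hn : (d : ℝ) < n) {ε : ℝ} (hε : 0 < ε) :
    Integrable (fun x : Ed d => (Ici ε).indicator (fun r : ℝ => r ^ (-n)) ‖x‖) := by
  have : Nonempty (Fin d) := ⟨⟨0, hd⟩⟩
  rw [integrable_fun_norm_addHaar volume (f := (Ici ε).indicator (fun r : ℝ => r ^ (-n)))]
  have h1 : IntegrableOn (fun r : ℝ => r ^ ((d : ℝ) - 1 - n)) (Ici ε) := by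
    rw [integrableOn_Ici_iff_integrableOn_Ioi]
    exact integrableOn_Ioi_rpow_of_lt (by linarith) hε
  have h2 : Integrable ((Ici ε).indicator (fun r : ℝ => r ^ ((d : ℝ) - 1 - n))) :=
    (integrable_indicator_iff measurableSet_Ici).2 h1
  refine h2.integrableOn.congr_fun ?_ measurableSet_Ioi
  intro r hr
  have hr0 : 0 < r := hr
  by_cases h : r ∈ Ici ε
  · simp only [indicator_of_mem h, finrank_euclideanSpace, Fintype.card_fin, smul_eq_mul]
    rw [← Real.rpow_natCast, ← Real.rpow_add hr0, Nat.cast_sub hd]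
    congr 1
    push_cast
    ring
  · simp [indicator_of_notMem h]

lemma mv_near_integrable {d : ℕ} (hd : 1 ≤ d) {m : ℝ} (hm : -(d : ℝ) < m) :
    Integrable (fun x : Ed d => (Iio 1).indicator (fun r : ℝ => r ^ m) ‖x‖) := by
  have : Nonempty (Fin d) := ⟨⟨0, hd⟩⟩
  rw [integrable_fun_norm_addHaar volume (f := (Iio 1).indicator (fun r : ℝ => r ^ m))]
  have h1 : IntegrableOn (fun r : ℝ => r ^ ((d : ℝ) - 1 + m)) (Ioo 0 1) := by
    rw [intervalIntegral.integrableOn_Ioo_rpow_iff zero_lt_one]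
    linarith
  have h2 : Integrable ((Ioo 0 1).indicator (fun r : ℝ => r ^ ((d : ℝ) - 1 + m))) :=
    (integrable_indicator_iff measurableSet_Ioo).2 h1
  refine h2.integrableOn.congr_fun ?_ measurableSet_Ioi
  intro r hr
  have hr0 : 0 < r := hr
  by_cases h : r ∈ Iio (1 : ℝ)
  · have h' : r ∈ Ioo (0 : ℝ) 1 := ⟨hr0, h⟩
    simp only [indicator_of_mem h, indicator_of_mem h', finrank_euclideanSpace, Fintype.card_fin,
      smul_eq_mul]
    rw [← Real.rpow_natCast, ← Real.rpow_add hr0, Nat.cast_sub hd]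
    congr 1
    push_cast
    ring
  · have h' : r ∉ Ioo (0 : ℝ) 1 := fun hh => h hh.2
    simp [indicator_of_notMem h, indicator_of_notMem h']

lemma mv_finite {d : ℕ} (hd : 1 ≤ d) {α : ℝ} (h0 : 0 < α) (h1 : α < 1)
    (φ : Ed d → ℝ) (hφ : ContDiff ℝ 1 φ) (hc : HasCompactSupport φ)
    {M : ℝ} (hM : ∀ x, |φ x| ≤ M) : gagliardoFinite α φ := by
  obtain ⟨L, hL⟩ := ContDiff.lipschitzWith_of_hasCompactSupport hc hφ (by simp)
  set n : ℝ := (d : ℝ) + 2 * α with hn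
  set h : Ed d → ℝ := fun x => (Iio 1).indicator (fun r : ℝ => r ^ (2 - n)) ‖x‖ +
    (Ici 1).indicator (fun r : ℝ => r ^ (-n)) ‖x‖ with hh
  have hint : Integrable h :=
    (mv_near_integrable hd (by linarith)).add (mv_tail_integrable hd (by linarith) one_pos)
  set S := tsupport φ
  have hS : Integrable (S.indicator (fun _ : Ed d => (1 : ℝ))) := by
    rw [integrable_indicator_iff hc.isCompact.isClosed.measurableSet]
    exact integrableOn_const hc.isCompact.measure_lt_top.ne
  have hprod := hS.convolution_integrand (ContinuousLinearMap.mul ℝ ℝ) hint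
  have hprod2 := hprod.swap
  have hdom := (hprod.add hprod2).const_mul ((L : ℝ) ^ 2 + 4 * M ^ 2)
  have hM0 : 0 ≤ M := (abs_nonneg _).trans (hM 0)
  unfold gagliardoFinite
  refine hdom.mono' ?_ ?_
  · have : Measurable φ := hφ.continuous.measurable
    refine Measurable.aestronglyMeasurable ?_
    fun_prop
  · refine Eventually.of_forall fun p => ?_
    obtain ⟨x, y⟩ := p
    have hK : (φ x - φ y) ^ 2 / ‖x - y‖ ^ n ≤ ((L : ℝ) ^ 2 + 4 * M ^ 2) * h (x - y) := by
      rcases lt_or_ge ‖x - y‖ 1 with hlt | hge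
      · have e1 : h (x - y) = ‖x - y‖ ^ (2 - n) := by
          simp [hh, hlt, not_le.2 hlt]
        rw [e1]
        rcases eq_or_lt_of_le (norm_nonneg (x - y)) with hz | hpos
        · have : x = y := by rw [← sub_eq_zero, ← norm_eq_zero, ← hz]
          subst this
          simp only [sub_self, ne_eq, OfNat.ofNat_ne_zero, not_false_eq_true, zero_pow, zero_div]
          positivity
        · rw [Real.rpow_sub hpos, ← mul_div_assoc]
          gcongr
          have := hL.dist_le_mul x y
          rw [Real.dist_eq, dist_eq_norm] at this
          have h3 : (φ x - φ y) ^ 2 ≤ ((L : ℝ) * ‖x - y‖) ^ 2 := by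
            rw [← sq_abs]; gcongr
          rw [Real.rpow_two]
          nlinarith [sq_nonneg (M * ‖x - y‖)]
      · have e1 : h (x - y) = ‖x - y‖ ^ (-n) := by
          simp [hh, hge, not_lt.2 hge]
        rw [e1, Real.rpow_neg (norm_nonneg _), div_eq_mul_inv]
        gcongr
        have a1 := abs_le.1 (hM x)
        have a2 := abs_le.1 (hM y)
        have : (φ x - φ y) ^ 2 ≤ (2 * M) ^ 2 := by
          apply sq_le_sq'  <;> linarith
        nlinarith [sq_nonneg (L : ℝ)]
    have hsymm : h (y - x) = h (x - y) := by simp only [hh, norm_sub_rev]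
    have hnn : 0 ≤ h (x - y) := by
      simp only [hh]
      apply add_nonneg <;> refine indicator_apply_nonneg (fun _ => ?_) <;> positivity
    rw [Real.norm_of_nonneg (by positivity)]
    simp only [Pi.add_apply, Function.comp_apply, Prod.swap_prod_mk, ContinuousLinearMap.mul_apply',
      hsymm]
    by_cases hx : x ∈ S
    · by_cases hy : y ∈ S
      · simp only [indicator_of_mem hx, indicator_of_mem hy]
        nlinarith [sq_nonneg (L : ℝ), sq_nonneg M, mul_nonneg (sq_nonneg (L : ℝ)) hnn, mul_nonneg (sq_nonneg M) hnn]
      · simp only [indicator_of_mem hx, indicator_of_notMem hy]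
        simpa using hK
    · by_cases hy : y ∈ S
      · simp only [indicator_of_notMem hx, indicator_of_mem hy]
        simpa using hK
      · rw [image_eq_zero_of_notMem_tsupport hx, image_eq_zero_of_notMem_tsupport hy]
        simp [indicator_of_notMem hx, indicator_of_notMem hy]

lemma mv_congr {d : ℕ} {α : ℝ} {u v : Ed d → ℝ} (h : u =ᵐ[volume] v) :
    (fun p : Ed d × Ed d => (u p.1 - u p.2) ^ 2 / ‖p.1 - p.2‖ ^ ((d : ℝ) + 2 * α)) =ᵐ[volume]
    (fun p : Ed d × Ed d => (v p.1 - v p.2) ^ 2 / ‖p.1 - p.2‖ ^ ((d : ℝ) + 2 * α)) := by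
  have h1 : ∀ᵐ p : Ed d × Ed d, u p.1 = v p.1 :=
    Measure.quasiMeasurePreserving_fst.ae h
  have h2 : ∀ᵐ p : Ed d × Ed d, u p.2 = v p.2 :=
    Measure.quasiMeasurePreserving_snd.ae h
  filter_upwards [h1, h2] with p e1 e2
  rw [e1, e2]

lemma mv_scale_fun {d : ℕ} {α : ℝ} (φ : Ed d → ℝ) (z : Ed d) {l : ℝ} (hl : 0 < l) :
    (fun p : Ed d × Ed d => (φ (l⁻¹ • (p.1 - z)) - φ (l⁻¹ • (p.2 - z))) ^ 2 /
      ‖p.1 - p.2‖ ^ ((d : ℝ) + 2 * α)) =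
    fun p => l ^ (-((d : ℝ) + 2 * α)) * (fun q : Ed d × Ed d => (φ q.1 - φ q.2) ^ 2 /
      ‖q.1 - q.2‖ ^ ((d : ℝ) + 2 * α)) (l⁻¹ • (p - (z, z))) := by
  funext p
  simp only [Prod.smul_fst, Prod.smul_snd, Prod.fst_sub, Prod.snd_sub]
  rw [← smul_sub, sub_sub_sub_cancel_right, norm_smul, Real.norm_of_nonneg (by positivity),
    Real.mul_rpow (by positivity) (norm_nonneg _), Real.inv_rpow hl.le, Real.rpow_neg hl.le]
  have : l ^ ((d : ℝ) + 2 * α) ≠ 0 := (Real.rpow_pos_of_pos hl _).ne'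
  by_cases h0 : ‖p.1 - p.2‖ ^ ((d : ℝ) + 2 * α) = 0
  · simp [h0]
  · field_simp

lemma mv_haar (d : ℕ) : (volume : Measure (Ed d × Ed d)).IsAddHaarMeasure :=
  inferInstanceAs ((volume : Measure (Ed d)).prod (volume : Measure (Ed d))).IsAddHaarMeasure

lemma mv_scale_finite {d : ℕ} {α : ℝ} {φ : Ed d → ℝ} (z : Ed d) {l : ℝ} (hl : 0 < l)
    (h : gagliardoFinite α φ) : gagliardoFinite α (fun x => φ (l⁻¹ • (x - z))) := by
  have := mv_haar d
  unfold gagliardoFinite at *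
  rw [mv_scale_fun φ z hl]
  refine Integrable.const_mul ?_ _
  exact (h.comp_smul (inv_ne_zero hl.ne')).comp_sub_right (z, z)

lemma mv_scale {d : ℕ} {α : ℝ} (φ : Ed d → ℝ) (z : Ed d) {l : ℝ} (hl : 0 < l) :
    gagliardoSq α (fun x => φ (l⁻¹ • (x - z))) = l ^ ((d : ℝ) - 2 * α) * gagliardoSq α φ := by
  have := mv_haar d
  unfold gagliardoSq
  rw [mv_scale_fun φ z hl, integral_const_mul]
  rw [integral_sub_right_eq_self (fun p : Ed d × Ed d => (fun q : Ed d × Ed d => (φ q.1 - φ q.2) ^ 2 /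
      ‖q.1 - q.2‖ ^ ((d : ℝ) + 2 * α)) (l⁻¹ • p)) (z, z)]
  rw [Measure.integral_comp_inv_smul_of_nonneg volume (fun q : Ed d × Ed d => (φ q.1 - φ q.2) ^ 2 /
      ‖q.1 - q.2‖ ^ ((d : ℝ) + 2 * α)) hl.le]
  rw [smul_eq_mul, ← mul_assoc, ← Real.rpow_natCast, ← Real.rpow_add hl]
  congr 2
  simp
  ring

lemma mv_quad (q a b : ℝ) (hb : 0 < b) : 2 * q * a - q ^ 2 * b ≤ a ^ 2 / b := by
  rw [le_div_iff₀ hb]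
  nlinarith [sq_nonneg (q * b - a)]

lemma mv_slice {d : ℕ} {n : ℝ} (hn : 0 ≤ n) {Sg : Set (Ed d)} {z y : Ed d} {ε ρ M : ℝ}
    (hε : 0 < ε) (hρε : ρ ≤ ε / 2) (hball : ball z ε ⊆ Sg) (hy : y ∉ Sg)
    (φ : Ed d → ℝ) (hM : ∀ x, |φ x| ≤ M) (hsupp : ∀ x, x ∉ closedBall z ρ → φ x = 0)
    (q : ℝ) (g : Ed d → ℝ) (hg : Integrable g)
    (hgS : ∀ x ∈ Sg, g x ≤ (2 * φ x * q - q ^ 2) / ‖x - y‖ ^ n)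
    (hgS' : ∀ x, x ∉ Sg → g x ≤ 0) :
    ∫ x, g x ≤ M ^ 2 * volume.real (closedBall z ρ) ^ 2 / volume.real (closedBall z (ε / 2)) *
      6 ^ n * ‖y - z‖ ^ (-n) := by
  have hM0 : 0 ≤ M := (abs_nonneg _).trans (hM 0)
  set r := ‖y - z‖ with hr
  have hrε : ε ≤ r := by
    by_contra hcon
    exact hy (hball (by rw [mem_ball, dist_eq_norm]; exact not_le.1 hcon))
  have hr0 : 0 < r := hε.trans_le hrε
  set V := volume.real (closedBall z ρ) with hV
  set W := volume.real (closedBall z (ε / 2)) with hW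
  have hWpos : 0 < W := by
    rw [hW, measureReal_def]
    exact ENNReal.toReal_pos (measure_closedBall_pos _ _ (by linarith)).ne'
      measure_closedBall_lt_top.ne
  set c1 := (r / 2) ^ (-n) with hc1
  set c2 := (3 * r / 2) ^ (-n) with hc2
  have hc1p : 0 < c1 := by positivity
  have hc2p : 0 < c2 := by positivity
  -- distance bounds
  have hdist : ∀ x ∈ closedBall z (ε / 2), r / 2 ≤ ‖x - y‖ ∧ ‖x - y‖ ≤ 3 * r / 2 := by
    intro x hx
    rw [mem_closedBall, dist_eq_norm] at hx
    have e1 : ‖y - z‖ ≤ ‖x - y‖ + ‖x - z‖ := by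
      have : y - z = -(x - y) + (x - z) := by abel
      rw [this]
      exact (norm_add_le _ _).trans (by rw [norm_neg])
    have e2 : ‖x - y‖ ≤ ‖x - z‖ + ‖y - z‖ := by
      have : x - y = (x - z) - (y - z) := by abel
      rw [this]
      exact norm_sub_le _ _
    constructor <;> linarith
  set H : Ed d → ℝ := fun x => (closedBall z ρ).indicator (fun _ => 2 * |q| * M * c1) x -
    (closedBall z (ε / 2)).indicator (fun _ => q ^ 2 * c2) x with hH
  have hi1 : Integrable ((closedBall z ρ).indicator (fun _ : Ed d => 2 * |q| * M * c1)) := by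
    rw [integrable_indicator_iff measurableSet_closedBall]
    exact integrableOn_const measure_closedBall_lt_top.ne
  have hi2 : Integrable ((closedBall z (ε / 2)).indicator (fun _ : Ed d => q ^ 2 * c2)) := by
    rw [integrable_indicator_iff measurableSet_closedBall]
    exact integrableOn_const measure_closedBall_lt_top.ne
  have hHint : ∫ x, H x = V * (2 * |q| * M * c1) - W * (q ^ 2 * c2) := by
    rw [hH, integral_sub hi1 hi2, integral_indicator_const _ measurableSet_closedBall,
      integral_indicator_const _ measurableSet_closedBall, smul_eq_mul, smul_eq_mul]
  have hgH : ∀ x, g x ≤ H x := by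
    intro x
    by_cases hx : x ∈ closedBall z (ε / 2)
    · obtain ⟨d1, d2⟩ := hdist x hx
      have hxS : x ∈ Sg := hball (closedBall_subset_ball (by linarith) hx)
      have hpos : 0 < ‖x - y‖ := lt_of_lt_of_le (by positivity) d1
      refine (hgS x hxS).trans ?_
      have k1 : ‖x - y‖ ^ (-n) ≤ c1 :=
        Real.rpow_le_rpow_of_nonpos (by positivity) d1 (by linarith)
      have k2 : c2 ≤ ‖x - y‖ ^ (-n) :=
        Real.rpow_le_rpow_of_nonpos hpos d2 (by linarith)
      have k0 : 0 ≤ ‖x - y‖ ^ (-n) := by positivity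
      rw [div_eq_mul_inv, ← Real.rpow_neg hpos.le]
      simp only [hH, indicator_of_mem hx]
      have p2 : q ^ 2 * c2 ≤ q ^ 2 * ‖x - y‖ ^ (-n) := by gcongr
      by_cases hx' : x ∈ closedBall z ρ
      · simp only [indicator_of_mem hx']
        have p1 : φ x * q ≤ |q| * M := by
          calc φ x * q ≤ |φ x * q| := le_abs_self _
            _ = |q| * |φ x| := by rw [abs_mul, mul_comm]
            _ ≤ |q| * M := by gcongr; exact hM x
        have p3 : 2 * (φ x * q) * ‖x - y‖ ^ (-n) ≤ 2 * (|q| * M) * c1 := by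
          calc 2 * (φ x * q) * ‖x - y‖ ^ (-n) ≤ 2 * (|q| * M) * ‖x - y‖ ^ (-n) := by gcongr
            _ ≤ _ := by gcongr
        nlinarith
      · simp only [indicator_of_notMem hx', hsupp x hx']
        nlinarith
    · have hx' : x ∉ closedBall z ρ := fun h => hx (closedBall_subset_closedBall hρε h)
      simp only [hH, indicator_of_notMem hx, indicator_of_notMem hx', sub_zero]
      by_cases hxS : x ∈ Sg
      · refine (hgS x hxS).trans ?_
        rw [hsupp x hx']
        refine div_nonpos_of_nonpos_of_nonneg ?_ (by positivity)
        nlinarith [sq_nonneg q]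
      · exact hgS' x hxS
  calc ∫ x, g x ≤ ∫ x, H x := integral_mono hg (hi1.sub hi2) hgH
    _ = 2 * |q| * (V * M * c1) - |q| ^ 2 * (W * c2) := by rw [hHint, sq_abs]; ring
    _ ≤ (V * M * c1) ^ 2 / (W * c2) := mv_quad _ _ _ (by positivity)
    _ = M ^ 2 * V ^ 2 / W * (c1 ^ 2 / c2) := by field_simp
    _ = M ^ 2 * V ^ 2 / W * (6 ^ n * r ^ (-n)) := by
      congr 1
      have e6 : (6 : ℝ) ^ n = 2 ^ n * 2 ^ n * (3 / 2) ^ n := by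
        rw [← Real.mul_rpow (by norm_num) (by norm_num), ← Real.mul_rpow (by norm_num) (by norm_num)]
        norm_num
      have e1 : c1 = 2 ^ n * r ^ (-n) := by
        rw [hc1, Real.div_rpow hr0.le (by norm_num), Real.rpow_neg (by norm_num : (0 : ℝ) ≤ 2)]
        field_simp
      have e2 : c2 = ((3 / 2) ^ n)⁻¹ * r ^ (-n) := by
        rw [hc2, mul_div_right_comm, Real.mul_rpow (by norm_num) hr0.le,
          Real.rpow_neg (by norm_num : (0 : ℝ) ≤ 3 / 2)]
      rw [e1, e2, e6]
      field_simp
    _ = _ := by ring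

set_option maxHeartbeats 1000000 in
lemma mv_key {d : ℕ} (hd : 1 ≤ d) {α : ℝ} (h0 : 0 < α) {Sg : Set (Ed d)} {z : Ed d} {ε ρ M : ℝ}
    (hSm : MeasurableSet Sg)
    (hε : 0 < ε) (hρε : ρ ≤ ε / 2) (hball : ball z ε ⊆ Sg)
    (φ u : Ed d → ℝ) (hM : ∀ x, |φ x| ≤ M) (hsupp : ∀ x, x ∉ closedBall z ρ → φ x = 0)
    (hu : ∀ x ∈ Sg, u x = φ x) (hfφ : gagliardoFinite α φ) (hfu : gagliardoFinite α u) :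
    gagliardoSq α φ - gagliardoSq α u ≤
      2 * (M ^ 2 * volume.real (closedBall z ρ) ^ 2 / volume.real (closedBall z (ε / 2)) *
      6 ^ ((d : ℝ) + 2 * α) * ∫ x : Ed d,
        (Ici ε).indicator (fun r : ℝ => r ^ (-((d : ℝ) + 2 * α))) ‖x‖) := by
  have hS0 : ∀ x, x ∉ Sg → φ x = 0 := fun x hx => hsupp x fun h =>
    hx (hball (closedBall_subset_ball (by linarith) h))
  unfold gagliardoFinite at hfφ hfu
  unfold gagliardoSq
  set n : ℝ := (d : ℝ) + 2 * α with hn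
  have hn0 : 0 ≤ n := by positivity
  rw [← integral_sub hfφ hfu]
  set F : Ed d × Ed d → ℝ := fun p => (φ p.1 - φ p.2) ^ 2 / ‖p.1 - p.2‖ ^ n -
    (u p.1 - u p.2) ^ 2 / ‖p.1 - p.2‖ ^ n with hF
  have hFi : Integrable F := hfφ.sub hfu
  set G := (Sg ×ˢ Sgᶜ).indicator F with hG
  have hGi : Integrable G := hFi.indicator (hSm.prod hSm.compl)
  have hGs : Integrable (fun p : Ed d × Ed d => G p.swap) := hGi.swap
  have hle : ∀ p, F p ≤ G p + G p.swap := by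
    rintro ⟨x, y⟩
    by_cases hx : x ∈ Sg <;> by_cases hy : y ∈ Sg
    · simp [hG, hF, hx, hy, hu]
    · simp [hG, hx, hy]
    · simp only [hG, Prod.swap_prod_mk, mem_prod, hx, hy, mem_compl_iff, not_true, not_false_iff,
        and_true, and_false, indicator_of_mem, indicator_of_notMem, zero_add]
      simp [hF, norm_sub_rev, sub_sq_comm, hx, hy]
    · simp only [hG, Prod.swap_prod_mk, mem_prod, hx, hy, mem_compl_iff, not_false_iff,
        false_and, indicator_of_notMem, zero_add]
      simp only [hF, hS0 x hx, hS0 y hy]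
      have : 0 ≤ (u x - u y) ^ 2 / ‖x - y‖ ^ n := by positivity
      simpa using this
  have hsw : ∫ p : Ed d × Ed d, G p.swap = ∫ p, G p := integral_prod_swap G
  have hstep : ∫ p, F p ≤ 2 * ∫ p, G p := by
    calc ∫ p, F p ≤ ∫ p, (G p + G p.swap) := integral_mono hFi (hGi.add hGs) hle
      _ = 2 * ∫ p, G p := by rw [integral_add hGi hGs, hsw]; ring
  refine hstep.trans ?_
  refine mul_le_mul_of_nonneg_left ?_ (by norm_num)
  have hfub : ∫ p, G p = ∫ y, ∫ x, G (x, y) := integral_prod_symm G hGi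
  rw [hfub]
  set A := M ^ 2 * volume.real (closedBall z ρ) ^ 2 / volume.real (closedBall z (ε / 2)) * 6 ^ n
  have hA : 0 ≤ A := by positivity
  have htail := mv_tail_integrable hd (n := n) (by linarith) hε
  rw [← integral_sub_right_eq_self (fun x : Ed d =>
    (Ici ε).indicator (fun r : ℝ => r ^ (-n)) ‖x‖) z, ← integral_const_mul]
  refine integral_mono_ae hGi.integral_prod_right ((htail.comp_sub_right z).const_mul _) ?_
  filter_upwards [Integrable.prod_left_ae hGi] with y hy
  by_cases hyS : y ∈ Sg
  · have : ∀ x, G (x, y) = 0 := fun x => by simp [hG, hyS]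
    simp only [this, integral_zero]
    exact mul_nonneg hA (indicator_apply_nonneg fun _ => by positivity)
  · have hrε : ‖y - z‖ ∈ Ici ε := by
      by_contra hcon
      exact hyS (hball (by rw [mem_ball, dist_eq_norm]; exact not_le.1 hcon))
    rw [indicator_of_mem hrε]
    refine mv_slice hn0 hε hρε hball hyS φ hM hsupp (u y) (fun x => G (x, y)) hy ?_ ?_
    · intro x hx
      apply le_of_eq
      simp only [hG, indicator_of_mem (show (x, y) ∈ Sg ×ˢ Sgᶜ from ⟨hx, hyS⟩), hF, hu x hx,
        hS0 y hyS]
      ring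
    · intro x hx
      simp [hG, hx]

/-- The quantitative bound, with a constant depending on `ε`. -/
lemma mv_bound {d : ℕ} (hd : 1 ≤ d) {α : ℝ} (h0 : 0 < α)
    (φ₀ : Ed d → ℝ) {M R : ℝ} (hM : ∀ x, |φ₀ x| ≤ M) (hR : 0 < R)
    (hsupp : ∀ x, x ∉ closedBall 0 R → φ₀ x = 0) (hfin : gagliardoFinite α φ₀)
    {Sg : Set (Ed d)} (hSm : MeasurableSet Sg) {ε : ℝ} (hε : 0 < ε) (z : Ed d)
    (hball : ball z ε ⊆ Sg) :
    ∃ D : ℝ, 0 ≤ D ∧ ∀ l : ℝ, 0 < l → R * l ≤ ε / 2 → ∀ u : Ed d → ℝ,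
      IsAHarmonicExt α Sg (fun x => φ₀ (l⁻¹ • (x - z))) u →
      gagliardoSq α u ≤ l ^ ((d : ℝ) - 2 * α) * gagliardoSq α φ₀ ∧
      l ^ ((d : ℝ) - 2 * α) * gagliardoSq α φ₀ - gagliardoSq α u ≤ D * M ^ 2 * (l ^ d) ^ 2 := by
  set J := ∫ x : Ed d, (Ici ε).indicator (fun r : ℝ => r ^ (-((d : ℝ) + 2 * α))) ‖x‖ with hJ
  have hJ0 : 0 ≤ J := integral_nonneg fun x => indicator_apply_nonneg fun _ => by positivity
  set v := volume.real (ball (0 : Ed d) 1)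
  set W := volume.real (closedBall z (ε / 2))
  have hv : 0 ≤ v := measureReal_nonneg
  have hW : 0 ≤ W := measureReal_nonneg
  refine ⟨2 * ((R ^ d * v) ^ 2 / W * 6 ^ ((d : ℝ) + 2 * α) * J), by positivity, ?_⟩
  intro l hl hRl u ⟨hu1, hu2, hu3⟩
  have hfl := mv_scale_finite z hl hfin
  refine ⟨?_, ?_⟩
  · rw [← mv_scale φ₀ z hl]
    exact hu3 _ hfl (Eventually.of_forall fun _ => rfl)
  · classical
    set φ : Ed d → ℝ := fun x => φ₀ (l⁻¹ • (x - z)) with hφ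
    set u' : Ed d → ℝ := fun x => if x ∈ Sg then φ x else u x with hu'
    have hae : u =ᵐ[volume] u' := by
      rw [ae_restrict_iff' hSm] at hu2
      filter_upwards [hu2] with x hx
      by_cases h : x ∈ Sg
      · simp [hu', h, hx h]
      · simp [hu', h]
    have hcong := mv_congr (α := α) hae
    have hfu' : gagliardoFinite α u' := Integrable.congr hu1 hcong
    have hequ : gagliardoSq α u = gagliardoSq α u' := integral_congr_ae hcong
    rw [← mv_scale φ₀ z hl, hequ]
    have hs : ∀ x, x ∉ closedBall z (R * l) → φ x = 0 := by
      intro x hx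
      apply hsupp
      intro hx'
      apply hx
      rw [mem_closedBall, dist_eq_norm] at hx' ⊢
      rw [sub_zero, norm_smul, Real.norm_of_nonneg (by positivity), inv_mul_le_iff₀ hl] at hx'
      linarith
    have := mv_key hd h0 hSm hε hRl hball φ u' (fun x => hM _) hs
      (fun x hx => by simp [hu', hx]) hfl hfu'
    refine this.trans (le_of_eq ?_)
    rw [Measure.addHaar_real_closedBall volume z (by positivity : 0 ≤ R * l)]
    simp only [finrank_euclideanSpace, Fintype.card_fin]
    rw [mul_pow]
    ring

/-- **Mesoscopic limit of the variance term**. -/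
theorem mesoscopic_variance_limit
    {d : ℕ} (hd : 1 ≤ d) {s : ℝ} (hs₁ : (d : ℝ) - 2 < s) (hs₂ : s < d)
    (φ₀ : Ed d → ℝ) (hφ₀ : ContDiff ℝ 1 φ₀) (hφ₀c : HasCompactSupport φ₀)
    (hφ₀b : ∃ C : ℝ, ∀ x, |φ₀ x| ≤ C) :
    ∃ C > (0 : ℝ), ∀ Sg : Set (Ed d), IsCompact Sg → 0 < volume Sg →
      ∀ (ε : ℝ) (z : Ed d), 0 < ε → z ∈ Sg → ε ≤ Metric.infDist z Sgᶜ →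
      ∀ u : ℝ → Ed d → ℝ,
        (∀ ℓ ∈ Set.Ioc (0 : ℝ) 1,
          IsAHarmonicExt (((d : ℝ) - s) / 2) Sg (fun x => φ₀ (ℓ⁻¹ • (x - z))) (u ℓ)) →
        Tendsto (fun ℓ : ℝ => ℓ ^ (-s) * gagliardoSq (((d : ℝ) - s) / 2) (u ℓ))
          (nhdsWithin (0 : ℝ) (Set.Ioi 0))
          (nhds (gagliardoSq (((d : ℝ) - s) / 2) φ₀)) ∧
        ∃ ℓ₀ : ℝ, 0 < ℓ₀ ∧ ℓ₀ ≤ 1 ∧ ∀ ℓ : ℝ, 0 < ℓ → ℓ ≤ ℓ₀ →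
          0 ≤ gagliardoSq (((d : ℝ) - s) / 2) φ₀ -
              ℓ ^ (-s) * gagliardoSq (((d : ℝ) - s) / 2) (u ℓ) ∧
          gagliardoSq (((d : ℝ) - s) / 2) φ₀ -
              ℓ ^ (-s) * gagliardoSq (((d : ℝ) - s) / 2) (u ℓ) ≤
            C * (⨆ x, |φ₀ x|) ^ 2 * ℓ ^ ((d : ℝ) - s) := by
  have hα0 : 0 < ((d : ℝ) - s) / 2 := by linarith
  have hα1 : ((d : ℝ) - s) / 2 < 1 := by linarith
  set α := ((d : ℝ) - s) / 2 with hα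
  set M := ⨆ x, |φ₀ x| with hMdef
  have hM : ∀ x, |φ₀ x| ≤ M := by
    obtain ⟨C, hC⟩ := hφ₀b
    exact fun x => le_ciSup (f := fun x => |φ₀ x|) ⟨C, by rintro _ ⟨y, rfl⟩; exact hC y⟩ x
  obtain ⟨R, hR, hRs⟩ : ∃ R : ℝ, 0 < R ∧ tsupport φ₀ ⊆ closedBall 0 R := by
    obtain ⟨R, hR⟩ := hφ₀c.isCompact.isBounded.subset_closedBall 0
    exact ⟨max R 1, by positivity, hR.trans (closedBall_subset_closedBall (le_max_left _ _))⟩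
  have hsupp : ∀ x, x ∉ closedBall 0 R → φ₀ x = 0 := fun x hx =>
    image_eq_zero_of_notMem_tsupport fun h => hx (hRs h)
  have hfin : gagliardoFinite α φ₀ := mv_finite hd hα0 hα1 φ₀ hφ₀ hφ₀c hM
  refine ⟨1, one_pos, ?_⟩
  intro Sg hSg _ ε z hε hz hεz u hu
  have hball : ball z ε ⊆ Sg := by
    intro x hx
    by_contra hxS
    have h1 : Metric.infDist z Sgᶜ ≤ dist z x := Metric.infDist_le_dist_of_mem hxS
    rw [mem_ball, dist_comm] at hx
    linarith
  obtain ⟨D, hD, hb⟩ := mv_bound hd hα0 φ₀ hM hR hsupp hfin hSg.isClosed.measurableSet hε z hball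
  have hs : (d : ℝ) - 2 * α = s := by rw [hα]; ring
  rw [hs] at hb
  have hmain : ∃ ℓ₀ : ℝ, 0 < ℓ₀ ∧ ℓ₀ ≤ 1 ∧ ∀ ℓ : ℝ, 0 < ℓ → ℓ ≤ ℓ₀ →
          0 ≤ gagliardoSq α φ₀ - ℓ ^ (-s) * gagliardoSq α (u ℓ) ∧
          gagliardoSq α φ₀ - ℓ ^ (-s) * gagliardoSq α (u ℓ) ≤
            1 * M ^ 2 * ℓ ^ ((d : ℝ) - s) := by
    refine ⟨min 1 (min (1 / (D + 1)) (ε / 2 / R)), by positivity, min_le_left _ _, ?_⟩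
    intro l hl hl'
    have l1 : l ≤ 1 := hl'.trans (min_le_left _ _)
    have l2 : l ≤ 1 / (D + 1) := hl'.trans ((min_le_right _ _).trans (min_le_left _ _))
    have l3 : l ≤ ε / 2 / R := hl'.trans ((min_le_right _ _).trans (min_le_right _ _))
    rw [le_div_iff₀ hR] at l3
    rw [le_div_iff₀ (by linarith)] at l2
    obtain ⟨b1, b2⟩ := hb l hl (by linarith) (u l) (hu l ⟨hl, l1⟩)
    have hls : 0 < l ^ (-s) := Real.rpow_pos_of_pos hl _
    have hinv : l ^ (-s) * l ^ s = 1 := by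
      rw [← Real.rpow_add hl]; simp
    have heq : gagliardoSq α φ₀ - l ^ (-s) * gagliardoSq α (u l) =
        l ^ (-s) * (l ^ s * gagliardoSq α φ₀ - gagliardoSq α (u l)) := by
      rw [mul_sub, ← mul_assoc, hinv, one_mul]
    rw [heq]
    refine ⟨mul_nonneg hls.le (by linarith), ?_⟩
    have hDl : D * l ^ d ≤ 1 := by
      have : l ^ d ≤ l := pow_le_of_le_one hl.le l1 (by omega)
      nlinarith
    calc l ^ (-s) * (l ^ s * gagliardoSq α φ₀ - gagliardoSq α (u l))
        ≤ l ^ (-s) * (D * M ^ 2 * (l ^ d) ^ 2) := by gcongr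
      _ = (D * l ^ d) * (M ^ 2 * (l ^ (-s) * l ^ d)) := by ring
      _ ≤ 1 * (M ^ 2 * (l ^ (-s) * l ^ d)) := by gcongr
      _ = 1 * M ^ 2 * l ^ ((d : ℝ) - s) := by
        rw [← Real.rpow_natCast l d, ← Real.rpow_add hl, neg_add_eq_sub]
        ring
  refine ⟨?_, hmain⟩
  obtain ⟨ℓ₀, hp, _, hq⟩ := hmain
  have hev : ∀ᶠ ℓ in nhdsWithin (0 : ℝ) (Set.Ioi 0), 0 < ℓ ∧ ℓ ≤ ℓ₀ := by
    filter_upwards [Ioc_mem_nhdsGT hp] with ℓ h using h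
  have hlim : Tendsto (fun ℓ : ℝ => gagliardoSq α φ₀ - 1 * M ^ 2 * ℓ ^ ((d : ℝ) - s))
      (nhdsWithin (0 : ℝ) (Set.Ioi 0)) (nhds (gagliardoSq α φ₀)) := by
    have h1 : Tendsto (fun ℓ : ℝ => ℓ ^ ((d : ℝ) - s)) (nhds 0) (nhds 0) := by
      have := (Real.continuousAt_rpow_const (0 : ℝ) ((d : ℝ) - s) (Or.inr (by linarith))).tendsto
      rwa [Real.zero_rpow (by linarith)] at this
    have h2 := ((h1.mono_left (nhdsWithin_le_nhds (s := Set.Ioi 0))).const_mul (1 * M ^ 2)).const_sub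
      (gagliardoSq α φ₀)
    simpa using h2
  refine tendsto_of_tendsto_of_tendsto_of_le_of_le' hlim tendsto_const_nhds ?_ ?_
  · filter_upwards [hev] with ℓ h
    linarith [(hq ℓ h.1 h.2).2]
  · filter_upwards [hev] with ℓ h
    linarith [(hq ℓ h.1 h.2).1]


end
end

section
/- Lagrange-interpolation decoupling of exponential moments. Let p ≥ 2 be an integer and let X_1, …, X_p be the p equally spaced points of [1/2, 1], X_i = 1/2 + (i−1)/(2(p−1)). Then there exists a constant C depending only on p such that the following holds. Let (Ω, μ) be a probability space, let γ_1, …, γ_{p−1} be real-valued random variables, let a > 0 and B ≥ 0, and assume that for every i ∈ {1,…,p} and every sign σ ∈ {−1, +1} the integral ∫ exp(σ ∑_{k=1}^{p−1} γ_k (aX_i)^k) dμ is finite with |log ∫ exp(σ ∑_{k=1}^{p−1} γ_k (aX_i)^k) dμ| ≤ B. Then: (i) for every 1 ≤ n ≤ p−1 and every sign σ ∈ {−1,+1}, |log ∫ exp(σ γ_n a^n / C) dμ| ≤ C B; and (ii) for every t ∈ ℝ with |t| ≤ a/C, |log ∫ exp(∑_{k=1}^{p−1} γ_k t^k) dμ|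 ≤ C (|t|/a) B. -/
noncomputable section

open MeasureTheory Filter Set Metric
open scoped ENNReal NNReal RealInnerProductSpace Topology

/-- The `p` equally spaced points of `[1/2, 1]`. -/
def Xnode (p : ℕ) (i : Fin p) : ℝ := 1 / 2 + (i : ℝ) / (2 * ((p : ℝ) - 1))

lemma Xnode_inj (p : ℕ) (hp : 2 ≤ p) : Function.Injective (Xnode p) := by
  intro i j h
  have h2 : (2 : ℝ) ≤ p := by exact_mod_cast hp
  have h1 : (0 : ℝ) < 2 * ((p : ℝ) - 1) := by linarith
  unfold Xnode at h
  have h3 : (i : ℝ) / (2 * ((p : ℝ) - 1)) = (j : ℝ) / (2 * ((p : ℝ) - 1)) := by linarith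
  have h4 := (div_left_inj' h1.ne').1 h3
  exact Fin.ext (by exact_mod_cast h4)

lemma interp_coeff (m : ℕ) (X : Fin (m + 1) → ℝ) (hX : Function.Injective X) :
    ∃ c : Fin (m + 1) → Fin m → ℝ, ∀ (g : Fin m → ℝ) (n : Fin m),
      g n = ∑ i, c i n * ∑ k : Fin m, g k * X i ^ ((k : ℕ) + 1) := by
  refine ⟨fun i n => (Matrix.vandermonde X)⁻¹ n.succ i, fun g n => ?_⟩
  have hd : IsUnit (Matrix.vandermonde X).det :=
    isUnit_iff_ne_zero.2 (Matrix.det_vandermonde_ne_zero_iff.2 hX)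
  have h1 : ∀ i, ∑ k : Fin m, g k * X i ^ ((k : ℕ) + 1)
      = (Matrix.vandermonde X).mulVec (Fin.cons 0 g) i := by
    intro i
    simp [Matrix.mulVec, dotProduct, Fin.sum_univ_succ, Matrix.vandermonde_apply, mul_comm]
  simp only [h1]
  have h2 : (Matrix.vandermonde X)⁻¹.mulVec ((Matrix.vandermonde X).mulVec (Fin.cons 0 g))
      = (Fin.cons 0 g : Fin (m + 1) → ℝ) := by
    rw [Matrix.mulVec_mulVec, Matrix.nonsing_inv_mul _ hd, Matrix.one_mulVec]
  have h3 := congrFun h2 n.succ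
  rw [Fin.cons_succ] at h3
  exact h3.symm

lemma exp_upper {Ω : Type} [MeasurableSpace Ω] (μ : Measure Ω) [IsProbabilityMeasure μ]
    {ι : Type} [Fintype ι] (L : ι → Ω → ℝ) (B : ℝ)
    (hI : ∀ i, ∀ σ : ℝ, σ = 1 ∨ σ = -1 → Integrable (fun ω => Real.exp (σ * L i ω)) μ)
    (hB : ∀ i, ∀ σ : ℝ, σ = 1 ∨ σ = -1 → ∫ ω, Real.exp (σ * L i ω) ∂μ ≤ Real.exp B)
    (c : ι → ℝ) (hc : ∑ i, |c i| ≤ 1) :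
    Integrable (fun ω => Real.exp (∑ i, c i * L i ω)) μ ∧
      ∫ ω, Real.exp (∑ i, c i * L i ω) ∂μ ≤ Real.exp ((∑ i, |c i|) * B) := by
  have hs : ∀ i, ∃ σ : ℝ, (σ = 1 ∨ σ = -1) ∧ c i = |c i| * σ := by
    intro i
    rcases le_total 0 (c i) with h | h
    · exact ⟨1, Or.inl rfl, by rw [abs_of_nonneg h]; ring⟩
    · exact ⟨-1, Or.inr rfl, by rw [abs_of_nonpos h]; ring⟩
  choose σ hσ hcs using hs
  set D := (∑ i, |c i|) * B with hD
  set F : Ω → ℝ := fun ω => Real.exp D *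
    ((1 - ∑ i, |c i|) + ∑ i, |c i| * (Real.exp (σ i * L i ω) * Real.exp (-B))) with hF
  have hpt : ∀ ω, Real.exp (∑ i, c i * L i ω) ≤ F ω := by
    intro ω
    have h := convexOn_exp.map_add_sum_le (t := Finset.univ) (w := fun i => |c i|)
      (p := fun i => σ i * L i ω - B) (v := 1 - ∑ i, |c i|) (q := 0)
      (fun i _ => abs_nonneg _) (by ring) (fun i _ => Set.mem_univ _)
      (by linarith) (Set.mem_univ _)
    simp only [smul_eq_mul, mul_zero, zero_add, Real.exp_zero, mul_one] at h
    have e1 : ∑ i, c i * L i ω = D + ∑ i, |c i| * (σ i * L i ω - B) := by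
      rw [hD, Finset.sum_mul, ← Finset.sum_add_distrib]
      refine Finset.sum_congr rfl fun i _ => ?_
      nth_rewrite 1 [hcs i]
      ring
    rw [e1, Real.exp_add, hF]
    refine mul_le_mul_of_nonneg_left (h.trans (le_of_eq ?_)) (Real.exp_pos _).le
    simp only [sub_eq_add_neg, Real.exp_add]
  have hterm : ∀ i, Integrable
      (fun ω => |c i| * (Real.exp (σ i * L i ω) * Real.exp (-B))) μ :=
    fun i => ((hI i _ (hσ i)).mul_const _).const_mul _
  have hsum : Integrable
      (fun ω => ∑ i, |c i| * (Real.exp (σ i * L i ω) * Real.exp (-B))) μ :=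
    integrable_finsetSum _ fun i _ => hterm i
  have hFi : Integrable F μ := ((integrable_const _).add hsum).const_mul _
  have hLm : ∀ i, AEMeasurable (L i) μ := by
    intro i
    have := Real.measurable_log.comp_aemeasurable (hI i 1 (Or.inl rfl)).aemeasurable
    refine this.congr (Filter.Eventually.of_forall fun ω => ?_)
    simp
  have hYm : AEStronglyMeasurable (fun ω => Real.exp (∑ i, c i * L i ω)) μ := by
    apply AEMeasurable.aestronglyMeasurable
    apply Real.measurable_exp.comp_aemeasurable
    exact Finset.aemeasurable_fun_sum _ fun i _ => (hLm i).const_mul _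
  have hYi : Integrable (fun ω => Real.exp (∑ i, c i * L i ω)) μ :=
    hFi.mono' hYm (Filter.Eventually.of_forall fun ω => by
      rw [Real.norm_eq_abs, abs_of_pos (Real.exp_pos _)]; exact hpt ω)
  refine ⟨hYi, (integral_mono hYi hFi hpt).trans ?_⟩
  have e2 : ∫ ω, F ω ∂μ = Real.exp D * ((1 - ∑ i, |c i|) +
      ∑ i, |c i| * ((∫ ω, Real.exp (σ i * L i ω) ∂μ) * Real.exp (-B))) := by
    rw [hF, integral_const_mul, integral_add (integrable_const _) hsum,
      integral_finsetSum _ fun i _ => hterm i]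
    simp [integral_const_mul, integral_mul_const]
  rw [e2]
  have h3 : ∑ i, |c i| * ((∫ ω, Real.exp (σ i * L i ω) ∂μ) * Real.exp (-B)) ≤ ∑ i, |c i| := by
    refine Finset.sum_le_sum fun i _ => ?_
    have h4 : (∫ ω, Real.exp (σ i * L i ω) ∂μ) * Real.exp (-B) ≤ 1 := by
      calc _ ≤ Real.exp B * Real.exp (-B) :=
            mul_le_mul_of_nonneg_right (hB i _ (hσ i)) (Real.exp_pos _).le
        _ = 1 := by rw [← Real.exp_add]; simp
    exact mul_le_of_le_one_right (abs_nonneg _) h4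
  exact mul_le_of_le_one_right (Real.exp_pos _).le (by linarith)

lemma log_exp_bound {Ω : Type} [MeasurableSpace Ω] (μ : Measure Ω) [IsProbabilityMeasure μ]
    {ι : Type} [Fintype ι] (L : ι → Ω → ℝ) (B : ℝ)
    (hI : ∀ i, ∀ σ : ℝ, σ = 1 ∨ σ = -1 → Integrable (fun ω => Real.exp (σ * L i ω)) μ)
    (hB : ∀ i, ∀ σ : ℝ, σ = 1 ∨ σ = -1 → ∫ ω, Real.exp (σ * L i ω) ∂μ ≤ Real.exp B)
    (c : ι → ℝ) (hc : ∑ i, |c i| ≤ 1) :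
    |Real.log (∫ ω, Real.exp (∑ i, c i * L i ω) ∂μ)| ≤ (∑ i, |c i|) * B := by
  obtain ⟨i1, u1⟩ := exp_upper μ L B hI hB c hc
  obtain ⟨i2, u2⟩ := exp_upper μ L B hI hB (fun i => - c i) (by simpa using hc)
  simp only [abs_neg, neg_mul, Finset.sum_neg_distrib] at i2 u2
  set D := (∑ i, |c i|) * B with hD
  set Y : Ω → ℝ := fun ω => ∑ i, c i * L i ω with hY
  have i3 : Integrable (fun ω => Real.exp (-Y ω)) μ := i2
  have hlow : Real.exp (-D) ≤ ∫ ω, Real.exp (Y ω) ∂μ := by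
    have hpt : ∀ ω, 2 * Real.exp (-D) - Real.exp (-D) ^ 2 * Real.exp (-Y ω)
        ≤ Real.exp (Y ω) := by
      intro ω
      have e : Real.exp (Y ω) * Real.exp (-Y ω) = 1 := by rw [← Real.exp_add]; simp
      have p1 := Real.exp_pos (Y ω)
      have p2 := Real.exp_pos (-Y ω)
      have h : 0 ≤ Real.exp (-Y ω) * (Real.exp (Y ω) - Real.exp (-D)) ^ 2 := by positivity
      nlinarith [h, e]
    have hm := integral_mono ((integrable_const _).sub (i3.const_mul _)) i1 hpt
    have e3 : ∫ ω, (2 * Real.exp (-D) - Real.exp (-D) ^ 2 * Real.exp (-Y ω)) ∂μ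
        = 2 * Real.exp (-D) - Real.exp (-D) ^ 2 * ∫ ω, Real.exp (-Y ω) ∂μ := by
      rw [integral_sub (integrable_const _) (i3.const_mul _), integral_const_mul]
      simp
      rw [integral_const_mul]
    have h5 : Real.exp (-D) ^ 2 * ∫ ω, Real.exp (-Y ω) ∂μ ≤ Real.exp (-D) := by
      calc _ ≤ Real.exp (-D) ^ 2 * Real.exp D :=
            mul_le_mul_of_nonneg_left u2 (by positivity)
        _ = Real.exp (-D) := by
            rw [sq, mul_assoc, ← Real.exp_add]; simp
    have h6 : 2 * Real.exp (-D) - Real.exp (-D) ^ 2 * ∫ ω, Real.exp (-Y ω) ∂μ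
      ≤ ∫ ω, Real.exp (Y ω) ∂μ := e3.symm.le.trans hm
    linarith
  have hpos : 0 < ∫ ω, Real.exp (Y ω) ∂μ := (Real.exp_pos _).trans_le hlow
  rw [abs_le]
  exact ⟨(Real.le_log_iff_exp_le hpos).2 hlow, (Real.log_le_iff_le_exp hpos).2 u1⟩

/-- **Lagrange-interpolation decoupling of exponential moments**. -/
theorem lagrange_decoupling (p : ℕ) (hp : 2 ≤ p) :
    ∃ C : ℝ, 0 < C ∧
      ∀ (Ω : Type) [MeasurableSpace Ω] (μ : Measure Ω), IsProbabilityMeasure μ →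
      ∀ (γ : Fin (p - 1) → Ω → ℝ) (a B : ℝ), 0 < a → 0 ≤ B →
      (∀ i : Fin p, ∀ σ : ℝ, σ = 1 ∨ σ = -1 →
        Integrable (fun ω =>
          Real.exp (σ * ∑ k : Fin (p - 1), γ k ω * (a * Xnode p i) ^ ((k : ℕ) + 1))) μ ∧
        |Real.log (∫ ω, Real.exp
            (σ * ∑ k : Fin (p - 1), γ k ω * (a * Xnode p i) ^ ((k : ℕ) + 1)) ∂μ)| ≤ B) →
      (∀ n : Fin (p - 1), ∀ σ : ℝ, σ = 1 ∨ σ = -1 →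
        |Real.log (∫ ω, Real.exp (σ * γ n ω * a ^ ((n : ℕ) + 1) / C) ∂μ)| ≤ C * B) ∧
      (∀ t : ℝ, |t| ≤ a / C →
        |Real.log (∫ ω, Real.exp (∑ k : Fin (p - 1), γ k ω * t ^ ((k : ℕ) + 1)) ∂μ)| ≤
          C * (|t| / a) * B) := by
  obtain ⟨m, rfl⟩ : ∃ m, p = m + 1 := ⟨p - 1, by omega⟩
  obtain ⟨c, hc⟩ := interp_coeff m (Xnode (m + 1)) (Xnode_inj _ hp)
  set M : ℝ := ∑ k, ∑ i, |c i k| with hM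
  have hM0 : 0 ≤ M := Finset.sum_nonneg fun k _ => Finset.sum_nonneg fun i _ => abs_nonneg _
  have hcol : ∀ k, ∑ i, |c i k| ≤ M := fun k =>
    Finset.single_le_sum (f := fun k => ∑ i, |c i k|)
      (fun k _ => Finset.sum_nonneg fun i _ => abs_nonneg _) (Finset.mem_univ k)
  have hC : 0 < 1 + M := by linarith
  refine ⟨1 + M, hC, ?_⟩
  intro Ω _ μ hμ γ a B ha hB0 H
  change Fin m → Ω → ℝ at γ
  set L : Fin (m + 1) → Ω → ℝ := fun i ω =>
    ∑ k : Fin m, γ k ω * (a * Xnode (m + 1) i) ^ ((k : ℕ) + 1) with hL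
  have hI : ∀ i, ∀ σ : ℝ, σ = 1 ∨ σ = -1 →
      Integrable (fun ω => Real.exp (σ * L i ω)) μ := fun i σ hσ => (H i σ hσ).1
  have hB : ∀ i, ∀ σ : ℝ, σ = 1 ∨ σ = -1 →
      ∫ ω, Real.exp (σ * L i ω) ∂μ ≤ Real.exp B := by
    intro i σ hσ
    have h1 : |Real.log (∫ ω, Real.exp (σ * L i ω) ∂μ)| ≤ B := (H i σ hσ).2
    have hpos : 0 < ∫ ω, Real.exp (σ * L i ω) ∂μ := integral_exp_pos (hI i σ hσ)
    exact (Real.log_le_iff_le_exp hpos).1 (abs_le.1 h1).2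
  have hγ : ∀ (n : Fin m) ω, γ n ω * a ^ ((n : ℕ) + 1) = ∑ i, c i n * L i ω := by
    intro n ω
    have := hc (fun k => γ k ω * a ^ ((k : ℕ) + 1)) n
    rw [this]
    simp only [hL, mul_pow, mul_assoc]
  constructor
  · intro n σ hσ
    change Fin m at n
    have hσa : |σ| = 1 := by rcases hσ with h | h <;> simp [h]
    have e : ∀ ω, σ * γ n ω * a ^ ((n : ℕ) + 1) / (1 + M)
        = ∑ i, (σ * c i n / (1 + M)) * L i ω := by
      intro ω
      rw [mul_assoc, hγ, Finset.mul_sum, Finset.sum_div]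
      exact Finset.sum_congr rfl fun i _ => by ring
    have hs : ∑ i, |σ * c i n / (1 + M)| ≤ 1 := by
      simp only [abs_div, abs_mul, hσa, one_mul, abs_of_pos hC]
      rw [← Finset.sum_div, div_le_one hC]
      linarith [hcol n]
    have hb := log_exp_bound μ L B hI hB (fun i => σ * c i n / (1 + M)) hs
    simp only [e]
    refine hb.trans ?_
    exact mul_le_mul_of_nonneg_right (by linarith) hB0
  · intro t ht
    have hs0 : 0 ≤ |t| / a := by positivity
    have hs1 : |t| / a * (1 + M) ≤ 1 := by
      rw [le_div_iff₀ hC] at ht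
      rw [div_mul_eq_mul_div, div_le_one ha]
      exact ht
    have hs2 : |t| / a ≤ 1 := by nlinarith
    have e : ∀ ω, ∑ k : Fin m, γ k ω * t ^ ((k : ℕ) + 1)
        = ∑ i, (∑ k, c i k * (t / a) ^ ((k : ℕ) + 1)) * L i ω := by
      intro ω
      have : ∀ k : Fin m, γ k ω * t ^ ((k : ℕ) + 1)
          = ∑ i, c i k * (t / a) ^ ((k : ℕ) + 1) * L i ω := by
        intro k
        have h1 : γ k ω * t ^ ((k : ℕ) + 1)
            = (γ k ω * a ^ ((k : ℕ) + 1)) * (t / a) ^ ((k : ℕ) + 1) := by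
          rw [mul_assoc, ← mul_pow, mul_div_cancel₀ _ ha.ne']
        rw [h1, hγ, Finset.sum_mul]
        exact Finset.sum_congr rfl fun i _ => by ring
      simp only [this, Finset.sum_mul]
      exact Finset.sum_comm
    have hs : ∑ i, |∑ k, c i k * (t / a) ^ ((k : ℕ) + 1)| ≤ M * (|t| / a) := by
      calc _ ≤ ∑ i, ∑ k, |c i k| * (|t| / a) := by
            refine Finset.sum_le_sum fun i _ => (Finset.abs_sum_le_sum_abs _ _).trans ?_
            refine Finset.sum_le_sum fun k _ => ?_
            rw [abs_mul, abs_pow, abs_div, abs_of_pos ha]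
            refine mul_le_mul_of_nonneg_left ?_ (abs_nonneg _)
            exact pow_le_of_le_one hs0 hs2 (Nat.succ_ne_zero _)
        _ = M * (|t| / a) := by
            rw [Finset.sum_comm, hM, Finset.sum_mul]
            simp only [Finset.sum_mul]
    have hb := log_exp_bound μ L B hI hB
      (fun i => ∑ k, c i k * (t / a) ^ ((k : ℕ) + 1)) (by nlinarith)
    have hfin : |Real.log (∫ ω, Real.exp (∑ k : Fin m, γ k ω * t ^ ((k : ℕ) + 1)) ∂μ)| ≤
          (1 + M) * (|t| / a) * B := by
      simp only [e]
      exact hb.trans (mul_le_mul_of_nonneg_right (by nlinarith) hB0)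
    exact hfin

end
end
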